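/- Define β_n(I) = #{π ∈ S_n : D(π) = I} and β^cyc_n(I) = #{n-cycles π : D(π) = I}. Then for all I ⊆ [n-1]: β^cyc_n(I) = (1/n) Σ_{d ∣ n} μ(d) · (-1)^{|I| - |I/d|} · β_{n/d}(I/d). -/

import Mathlib

/-! The proof is an inclusion–exclusion on top of a form of the Gessel–Reutenauer correspondence.

A set `J ⊆ [n-1]` cuts the positions `0, …, n-1` into consecutive blocks, and `D(π) ⊆ J` says that
`π` is increasing on each block (`descSet_subset_iff`). Consider words of length `n` in which the
letter `v` occurs as often as block `v` has elements.

* Such words are equinumerous with the permutations satisfying `D(π) ⊆ J` (`card_wordsOf`).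
* For an `n`-cycle `π` with `D(π) ⊆ J` and a base point `x`, record the blocks visited by
  `x, π x, π² x, …`. Since `π` is increasing on blocks, the order of the points is the
  lexicographic order of their itineraries, so the itinerary is a primitive word and determines
  `(π, x)`. Conversely, sorting the rotations of a primitive word lexicographically turns the
  rotation by one position into such an `n`-cycle. Hence there are `n α^cyc_n(J)` primitive words
  (`card_primitive`).
* A word of period `n / d` has content `J` exactly when `d` divides every element of `J` and the
  shorter word has content `J / d` (`wordsOf_periodic`). Möbius inversion over the minimal period
  gives `n α^cyc_n(J) = ∑ μ(d) α_{n/d}(J/d)`, the sum over the `d ∣ n` dividing every element of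
  `J` (`mul_alphaC_eq`).

Finally `α` and `α^cyc` are sums of `β` and `β^cyc` over subsets. Inverting these sums, the term of
`d` becomes an alternating sum over the subsets of `I` made of multiples of `d`, that is, over the
subsets of `I / d`, with an extra sign `(-1)^(|I| - |I/d|)` (`sum_powerset_divSet`). -/


open Finset

/-- The value `π(i)` of a permutation of `[n]`, in 1-based position notation. -/
def permVal {n : ℕ} (π : Equiv.Perm (Fin n)) (i : ℕ) : ℕ :=
  if h : i - 1 < n then ((π ⟨i - 1, h⟩ : Fin n) : ℕ) else 0

/-- The descent set `D(π) = {i ∈ [n-1] : π(i) > π(i+1)}` (1-based). -/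
def descSet {n : ℕ} (π : Equiv.Perm (Fin n)) : Finset ℕ :=
  (Finset.Ioo 0 n).filter fun i => permVal π (i + 1) < permVal π i

/-- `π` is an `n`-cycle: a permutation of `[n]` consisting of a single cycle of length `n`. -/
def IsFullCycle {n : ℕ} (π : Equiv.Perm (Fin n)) : Prop :=
  ∀ x y : Fin n, ∃ k : ℕ, (π ^ k) x = y

/-- `α_n(I)`: number of permutations of `[n]` with descent set contained in `I`. -/
noncomputable def alphaP (n : ℕ) (I : Finset ℕ) : ℕ :=
  Nat.card {π : Equiv.Perm (Fin n) // descSet π ⊆ I}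

/-- `α^cyc_n(I)`: number of `n`-cycles with descent set contained in `I`. -/
noncomputable def alphaC (n : ℕ) (I : Finset ℕ) : ℕ :=
  Nat.card {π : Equiv.Perm (Fin n) // IsFullCycle π ∧ descSet π ⊆ I}

/-- `β_n(I)`: number of permutations of `[n]` with descent set exactly `I`. -/
noncomputable def betaP (n : ℕ) (I : Finset ℕ) : ℕ :=
  Nat.card {π : Equiv.Perm (Fin n) // descSet π = I}

/-- `β^cyc_n(I)`: number of `n`-cycles with descent set exactly `I`. -/
noncomputable def betaC (n : ℕ) (I : Finset ℕ) : ℕ :=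
  Nat.card {π : Equiv.Perm (Fin n) // IsFullCycle π ∧ descSet π = I}

/-- `I/d = {i/d : i ∈ I, d ∣ i}`. -/
def divSet (I : Finset ℕ) (d : ℕ) : Finset ℕ :=
  (I.filter fun i => d ∣ i).image (· / d)

/-! ### Words and their contents -/

/-- The shift `(w₀, w₁, w₂, …) ↦ (w₁, w₂, w₃, …)` on infinite words. -/
def shiftSeq (w : ℕ → ℕ) : ℕ → ℕ := fun i => w (i + 1)

/-- The index of the block containing the 0-based position `x`, when `J` cuts the positions into
consecutive blocks (`j ∈ J` separates the 0-based positions `j - 1` and `j`). -/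
def blk (J : Finset ℕ) (x : ℕ) : ℕ := #{j ∈ J | j ≤ x}

/-- The words of length `n` in which each letter `v` occurs as often as the `v`-th block of `J`
has elements. A word of length `n` is encoded as its `n`-periodic infinite repetition. -/
def wordsOf (n : ℕ) (J : Finset ℕ) : Set (ℕ → ℕ) :=
  {w | Function.IsPeriodicPt shiftSeq n w ∧
    ∀ v, #{i ∈ range n | w i = v} = #{i ∈ range n | blk J i = v}}

lemma shiftSeq_iterate (k : ℕ) (w : ℕ → ℕ) (i : ℕ) : (shiftSeq^[k] w) i = w (i + k) := by
  induction k generalizing w with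
  | zero => rfl
  | succ k ih => rw [Function.iterate_succ_apply, ih, shiftSeq]; congr 1

lemma isPeriodicPt_shiftSeq {n : ℕ} {w : ℕ → ℕ} :
    Function.IsPeriodicPt shiftSeq n w ↔ ∀ i, w (i + n) = w i := by
  rw [Function.IsPeriodicPt, Function.IsFixedPt, funext_iff]
  simp only [shiftSeq_iterate]

lemma apply_mod_of_isPeriodicPt {n : ℕ} {w : ℕ → ℕ} (h : Function.IsPeriodicPt shiftSeq n w)
    (i : ℕ) : w (i % n) = w i :=
  Function.Periodic.map_mod_nat (isPeriodicPt_shiftSeq.1 h) i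

lemma blk_mono (J : Finset ℕ) : Monotone (blk J) := fun _ _ hxy =>
  card_le_card fun _ hj => by
    simp only [mem_filter] at hj ⊢
    exact ⟨hj.1, hj.2.trans hxy⟩

lemma blk_lt_iff {J : Finset ℕ} {x j : ℕ} (hj : j ∈ J) : blk J x < blk J j ↔ x < j := by
  constructor
  · intro h
    by_contra! hc
    exact absurd (blk_mono J hc) (not_le.2 h)
  · intro h
    apply card_lt_card
    refine ⟨fun a ha => ?_, fun hs => ?_⟩
    · simp only [mem_filter] at ha ⊢
      exact ⟨ha.1, ha.2.trans h.le⟩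
    · have := hs (mem_filter.2 ⟨hj, le_rfl⟩)
      simp only [mem_filter] at this
      omega

lemma blk_succ_eq {J : Finset ℕ} {x : ℕ} (h : x + 1 ∉ J) : blk J (x + 1) = blk J x := by
  unfold blk
  congr 1
  apply filter_congr
  intro a ha
  have : a ≠ x + 1 := fun e => h (e ▸ ha)
  omega

/-! ### Permutations with `D(π) ⊆ J` as words -/

lemma permVal_of_lt {n : ℕ} (π : Equiv.Perm (Fin n)) (x : ℕ) (hx : x < n) :
    permVal π (x + 1) = π ⟨x, hx⟩ := by
  simp [permVal, hx]

/-- `D(π) ⊆ J` means that `π` is increasing on each block of `J`. -/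
lemma descSet_subset_iff {n : ℕ} (π : Equiv.Perm (Fin n)) (J : Finset ℕ) :
    descSet π ⊆ J ↔ ∀ x y : Fin n, x < y → blk J x = blk J y → π x < π y := by
  constructor
  · intro h
    have key : ∀ (k x : ℕ) (hx : x < n) (hy : x + k + 1 < n), blk J x = blk J (x + k + 1) →
        π ⟨x, hx⟩ < π ⟨x + k + 1, hy⟩ := by
      intro k x hx
      have step : ∀ (z : ℕ) (hz : z + 1 < n), blk J z = blk J (z + 1) →
          π ⟨z, by omega⟩ < π ⟨z + 1, hz⟩ := by
        intro z hz hb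
        have hzJ : z + 1 ∉ J := fun hm => by
          have := (blk_lt_iff hm).2 (Nat.lt_add_one z)
          omega
        have hD : z + 1 ∉ descSet π := fun hm => hzJ (h hm)
        simp only [descSet, mem_filter, mem_Ioo, not_and, not_lt] at hD
        have h2 := hD ⟨by omega, hz⟩
        rw [permVal_of_lt π z (by omega), permVal_of_lt π (z + 1) hz] at h2
        refine lt_of_le_of_ne h2 fun e => ?_
        have := π.injective e
        simp at this
      induction k with
      | zero => intro hy hb; exact step x hy hb
      | succ k ih =>
        intro hy hb
        have h1 := blk_mono J (show x ≤ x + k + 1 by omega)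
        have h2 := blk_mono J (show x + k + 1 ≤ x + (k + 1) + 1 by omega)
        exact (ih (by omega) (by omega)).trans (step (x + k + 1) hy (by
          have : x + (k + 1) + 1 = x + k + 1 + 1 := by ring
          rw [this] at hb h2
          omega))
    intro x y hxy hb
    have := key (y - x - 1) x x.2 (by omega)
    have e : (x : ℕ) + (y - x - 1) + 1 = y := by omega
    simp only [e] at this
    exact this hb
  · intro h i hi
    simp only [descSet, mem_filter, mem_Ioo] at hi
    obtain ⟨⟨h0, hn⟩, hlt⟩ := hi
    obtain ⟨x, rfl⟩ : ∃ x, i = x + 1 := ⟨i - 1, by omega⟩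
    by_contra hJ
    have := h ⟨x, by omega⟩ ⟨x + 1, hn⟩ (by simp [Fin.lt_def]) (blk_succ_eq hJ).symm
    rw [permVal_of_lt π x (by omega), permVal_of_lt π (x + 1) hn] at hlt
    exact absurd hlt (not_lt.2 (Fin.le_def.1 this.le))

lemma card_filter_range_eq (n : ℕ) (p : ℕ → Prop) [DecidablePred p] :
    #{i ∈ range n | p i} = #{i : Fin n | p i} := by
  rw [card_filter, card_filter, sum_range]

/-- A monotone tuple is determined by the multiplicities of its values. -/
lemma eq_of_monotone_of_card_fiber_eq {n : ℕ} {f g : Fin n → ℕ} (hf : Monotone f)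
    (hg : Monotone g) (h : ∀ v, #{i | f i = v} = #{i | g i = v}) : f = g := by
  have e : ∀ v, {a // f a = v} ≃ {b // g b = v} := fun v =>
    Fintype.equivOfCardEq (by simpa [Fintype.card_subtype] using h v)
  let σ : Equiv.Perm (Fin n) := Equiv.ofFiberEquiv e
  have hσ : g ∘ σ = f := funext fun a => Equiv.ofFiberEquiv_map e a
  have := Tuple.unique_monotone (f := g) (σ := σ) (τ := 1) (by rwa [hσ]) (by simpa using hg)
  rw [← hσ, this]
  rfl

lemma card_fiber_comp {n : ℕ} (f : Fin n → ℕ) (σ : Equiv.Perm (Fin n)) (v : ℕ) :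
    #{i | f (σ i) = v} = #{i | f i = v} :=
  card_bij (fun i _ => σ i) (by simp) (by simp) fun b hb => ⟨σ.symm b, by simpa using hb, by simp⟩

/-- If `k` is injective and `e`, `e'` both list its values in increasing order, then `e = e'`. -/
lemma perm_eq_of_monotone_key {n : ℕ} {L : Type*} [PartialOrder L] {k : Fin n → L}
    (hk : Function.Injective k) {e e' : Equiv.Perm (Fin n)} (he : Monotone (k ∘ e))
    (he' : Monotone (k ∘ e')) : e = e' := by
  ext1 x
  exact hk (congrFun (Tuple.unique_monotone he he') x)

/-- The number of permutations with `D(π) ⊆ J` is the number of words with the content of `J`: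
the permutation `π` corresponds to the word that has the letter `blk J x` at position `π x`. -/
lemma card_wordsOf (n : ℕ) (hn : 0 < n) (J : Finset ℕ) :
    (wordsOf n J).ncard = alphaP n J := by
  symm
  rw [← Nat.card_coe_set_eq]
  let Φ : Equiv.Perm (Fin n) → ℕ → ℕ := fun π i => blk J (π.symm ⟨i % n, Nat.mod_lt _ hn⟩)
  have hΦ : ∀ (π : Equiv.Perm (Fin n)) (x : Fin n), Φ π (π x) = blk J x := fun π x => by
    simp [Φ, Nat.mod_eq_of_lt (π x).2]
  have hmem : ∀ π, Φ π ∈ wordsOf n J := fun π => by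
    refine ⟨isPeriodicPt_shiftSeq.2 fun i => by simp [Φ], fun v => ?_⟩
    rw [card_filter_range_eq, card_filter_range_eq, ← card_fiber_comp (fun i : Fin n => Φ π i) π]
    simp only [hΦ]
  refine Nat.card_eq_of_bijective
    (fun π : {π : Equiv.Perm (Fin n) // descSet π ⊆ J} => (⟨Φ π.1, hmem π.1⟩ : wordsOf n J))
    ⟨?_, ?_⟩
  · rintro ⟨π, hπ⟩ ⟨σ, hσ⟩ h
    simp only [Subtype.mk.injEq] at h ⊢
    rw [descSet_subset_iff] at hπ hσ
    -- both permutations sort the positions by (letter, position)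
    have aux : ∀ τ : Equiv.Perm (Fin n),
        (∀ x y : Fin n, x < y → blk J x = blk J y → τ x < τ y) → Φ τ = Φ π →
        Monotone ((fun a : Fin n => toLex (Φ π a, a)) ∘ τ) := by
      intro τ hτ hw
      refine StrictMono.monotone fun x y hxy => ?_
      simp only [Function.comp, ← hw, hΦ, Prod.Lex.toLex_lt_toLex]
      rcases (blk_mono J (Fin.le_def.1 hxy.le)).lt_or_eq with h1 | h1
      · exact Or.inl h1
      · exact Or.inr ⟨h1, hτ x y hxy h1⟩
    refine perm_eq_of_monotone_key (k := fun a : Fin n => toLex (Φ π a, a)) ?_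
      (aux π hπ rfl) (aux σ hσ h.symm)
    intro a b hab
    simpa using (congrArg (fun z => (ofLex z).2) hab)
  · rintro ⟨w, hw⟩
    let k : Fin n → ℕ ×ₗ Fin n := fun a => toLex (w a, a)
    have hk : Function.Injective k := fun a b hab =>
      congrArg (fun z => (ofLex z).2) hab
    let π := Tuple.sort k
    have hs : StrictMono (k ∘ π) :=
      (Tuple.monotone_sort k).strictMono_of_injective (hk.comp π.injective)
    have hlt : ∀ x y, x < y → w (π x) < w (π y) ∨ w (π x) = w (π y) ∧ π x < π y := fun x y hxy => by
      have := hs hxy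
      simpa [k, Prod.Lex.toLex_lt_toLex] using this
    have hc : (fun x : Fin n => w (π x)) = fun x : Fin n => blk J x := by
      apply eq_of_monotone_of_card_fiber_eq
      · intro x y hxy
        rcases hxy.lt_or_eq with h | rfl
        · rcases hlt x y h with h1 | h1
          · exact h1.le
          · exact h1.1.le
        · exact le_rfl
      · exact fun x y hxy => blk_mono J hxy
      · intro v
        rw [card_fiber_comp (fun a : Fin n => w a) π, ← card_filter_range_eq n (fun a => w a = v),
          hw.2 v, card_filter_range_eq]
    have hc' := fun x => congrFun hc x
    refine ⟨⟨π, (descSet_subset_iff _ _).2 fun x y hxy hb => ?_⟩, ?_⟩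
    · rcases hlt x y hxy with h1 | h1
      · rw [hc' x, hc' y] at h1
        omega
      · exact h1.2
    · ext i
      simp only [Φ]
      rw [← hc', Equiv.apply_symm_apply]
      exact apply_mod_of_isPeriodicPt hw.1 i

/-! ### Cycles with `D(π) ⊆ J` as primitive words -/

/-- The lexicographic comparison of two infinite words, unfolded by one letter. -/
lemma toLex_lt_iff_shiftSeq (a b : ℕ → ℕ) :
    toLex a < toLex b ↔
      a 0 < b 0 ∨ a 0 = b 0 ∧ toLex (shiftSeq a) < toLex (shiftSeq b) := by
  constructor
  · rintro ⟨i, hlt, hi⟩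
    cases i with
    | zero => exact Or.inl hi
    | succ i =>
      exact Or.inr ⟨hlt 0 (Nat.succ_pos i), i, fun j hj => hlt (j + 1) (Nat.succ_lt_succ hj), hi⟩
  · rintro (h | ⟨h0, i, hlt, hi⟩)
    · exact ⟨0, fun j hj => absurd hj (Nat.not_lt_zero j), h⟩
    · refine ⟨i + 1, fun j hj => ?_, hi⟩
      cases j with
      | zero => exact h0
      | succ j => exact hlt j (Nat.lt_of_succ_lt_succ hj)

/-- The itinerary of `x`: the blocks of `J` visited by `x, π x, π² x, …`. -/
def itin {n : ℕ} (J : Finset ℕ) (π : Equiv.Perm (Fin n)) (x : Fin n) : ℕ → ℕ :=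
  fun i => blk J ((π ^ i) x)

lemma itin_iterate {n : ℕ} (J : Finset ℕ) (π : Equiv.Perm (Fin n)) (x : Fin n) (k : ℕ) :
    shiftSeq^[k] (itin J π x) = itin J π ((π ^ k) x) := by
  ext i
  rw [shiftSeq_iterate, itin, itin, pow_add, Equiv.Perm.mul_apply]

/-- In an `n`-cycle the first `n` iterates of a point exhaust `Fin n`. -/
lemma IsFullCycle.orbit_bijective {n : ℕ} {π : Equiv.Perm (Fin n)} (h : IsFullCycle π)
    (x : Fin n) : Function.Bijective (fun i : Fin n => (π ^ (i : ℕ)) x) ∧ π ^ n = 1 := by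
  have hpos : 0 < Function.minimalPeriod π x :=
    Function.minimalPeriod_pos_of_mem_periodicPts
      (Function.Injective.mem_periodicPts π.injective x)
  have hbij : Function.Bijective
      (fun i : Fin (Function.minimalPeriod π x) => (π ^ (i : ℕ)) x) := by
    constructor
    · intro i j hij
      simp only [Equiv.Perm.coe_pow] at hij
      exact Fin.ext (Function.iterate_injOn_Iio_minimalPeriod i.2 j.2 hij)
    · intro y
      obtain ⟨k, hk⟩ := h x y
      refine ⟨⟨k % Function.minimalPeriod π x, Nat.mod_lt _ hpos⟩, ?_⟩
      simp only [Equiv.Perm.coe_pow] at hk ⊢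
      rw [Function.iterate_mod_minimalPeriod_eq, hk]
  have hp : Function.minimalPeriod π x = n := by
    simpa using Fintype.card_of_bijective hbij
  have hx : (π ^ n) x = x := by
    rw [Equiv.Perm.coe_pow]
    have := Function.iterate_minimalPeriod (f := π) (x := x)
    rwa [hp] at this
  refine ⟨?_, ?_⟩
  · rw [hp] at hbij
    exact hbij
  · ext1 y
    obtain ⟨k, rfl⟩ := h x y
    rw [← Equiv.Perm.mul_apply, ← pow_add, add_comm, pow_add, Equiv.Perm.mul_apply, hx]
    rfl

/-- While the itineraries of `x < y` agree, `π` is applied inside common blocks and keeps the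
order. -/
lemma iterates_lt {n : ℕ} {J : Finset ℕ} {π : Equiv.Perm (Fin n)} (hD : descSet π ⊆ J)
    {x y : Fin n} (hxy : x < y) (k : ℕ) (h : ∀ i < k, itin J π x i = itin J π y i) :
    (π ^ k) x < (π ^ k) y := by
  induction k with
  | zero => exact hxy
  | succ k ih =>
    rw [pow_succ', Equiv.Perm.mul_apply, Equiv.Perm.mul_apply]
    exact (descSet_subset_iff π J).1 hD _ _ (ih fun i hi => h i (by omega)) (h k (by omega))

/-- Points of an `n`-cycle with `D(π) ⊆ J` are separated by their itineraries: otherwise some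
power `π ^ m` would satisfy `x < π ^ m x < π ^ (2 * m) x < ⋯`. -/
lemma itin_injective {n : ℕ} {J : Finset ℕ} {π : Equiv.Perm (Fin n)} (hc : IsFullCycle π)
    (hD : descSet π ⊆ J) : Function.Injective (itin J π) := by
  have key : ∀ x y : Fin n, x < y → itin J π x ≠ itin J π y := by
    intro x y hxy he
    have hlt := fun k => iterates_lt hD hxy k fun i _ => congrFun he i
    obtain ⟨m, rfl⟩ := hc x y
    have hmono : StrictMono fun j : ℕ => (π ^ (j * m)) x := strictMono_nat_of_lt_succ fun j => by
      have := hlt (j * m)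
      rwa [← Equiv.Perm.mul_apply, ← pow_add, ← Nat.succ_mul] at this
    exact not_injective_infinite_finite _ hmono.injective
  intro x y h
  rcases lt_trichotomy x y with h1 | h1 | h1
  · exact absurd h (key x y h1)
  · exact h1
  · exact absurd h.symm (key y x h1)

/-- Itineraries are ordered lexicographically in the same way as their starting points. -/
lemma itin_strictMono {n : ℕ} {J : Finset ℕ} {π : Equiv.Perm (Fin n)} (hc : IsFullCycle π)
    (hD : descSet π ⊆ J) : StrictMono fun x => toLex (itin J π x) := by
  intro x y hxy
  have hne : ∃ i, itin J π x i ≠ itin J π y i := by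
    by_contra! h
    exact hxy.ne (itin_injective hc hD (funext h))
  classical
  have hmin : ∀ i < Nat.find hne, itin J π x i = itin J π y i := fun i hi => by
    simpa using Nat.find_min hne hi
  exact ⟨Nat.find hne, hmin, lt_of_le_of_ne
    (blk_mono J (Fin.le_def.1 (iterates_lt hD hxy _ hmin).le)) (Nat.find_spec hne)⟩

lemma itin_mem {n : ℕ} (hn : 0 < n) {J : Finset ℕ} {π : Equiv.Perm (Fin n)}
    (hc : IsFullCycle π) (hD : descSet π ⊆ J) (x : Fin n) :
    itin J π x ∈ wordsOf n J ∧ Function.minimalPeriod shiftSeq (itin J π x) = n := by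
  obtain ⟨hbij, hpow⟩ := hc.orbit_bijective x
  have hper : Function.IsPeriodicPt shiftSeq n (itin J π x) := by
    rw [Function.IsPeriodicPt, Function.IsFixedPt, itin_iterate, hpow]
    rfl
  refine ⟨⟨hper, fun v => ?_⟩, ?_⟩
  · rw [card_filter_range_eq, card_filter_range_eq,
      ← card_fiber_comp (fun i : Fin n => blk J i) (Equiv.ofBijective _ hbij)]
    rfl
  · have hle := hper.minimalPeriod_le hn
    have hpos := hper.minimalPeriod_pos hn
    by_contra hne
    have hlt := lt_of_le_of_ne hle hne
    have h1 := Function.iterate_minimalPeriod (f := shiftSeq) (x := itin J π x)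
    rw [itin_iterate] at h1
    have h2 := itin_injective hc hD h1
    have h3 := @hbij.1 ⟨_, hlt⟩ ⟨0, hn⟩ h2
    simp only [Fin.mk.injEq] at h3
    omega

lemma val_addRight_pow {n : ℕ} [NeZero n] (k : ℕ) (a : Fin n) :
    (((Equiv.addRight (1 : Fin n)) ^ k) a : ℕ) = (a + k) % n := by
  induction k with
  | zero => simp [Nat.mod_eq_of_lt a.2]
  | succ k ih =>
    rw [pow_succ', Equiv.Perm.mul_apply, Equiv.coe_addRight, Fin.val_add, ih, Fin.val_one']
    simp [add_assoc]

/-- Gessel–Reutenauer correspondence: pairs of an `n`-cycle with `D(π) ⊆ J` and a base point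
correspond, by taking itineraries, to the primitive words with the content of `J`. -/
lemma card_primitive (n : ℕ) (hn : 0 < n) (J : Finset ℕ) :
    {w ∈ wordsOf n J | Function.minimalPeriod shiftSeq w = n}.ncard = n * alphaC n J := by
  have : NeZero n := ⟨hn.ne'⟩
  symm
  rw [← Nat.card_coe_set_eq, alphaC, mul_comm]
  conv_lhs => rw [← Nat.card_fin n, ← Nat.card_prod]
  rw [Nat.card_fin]
  refine Nat.card_eq_of_bijective
    (fun p : {π : Equiv.Perm (Fin n) // IsFullCycle π ∧ descSet π ⊆ J} × Fin n =>
      (⟨itin J p.1.1 p.2, itin_mem hn p.1.2.1 p.1.2.2 p.2⟩ :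
        {w ∈ wordsOf n J | Function.minimalPeriod shiftSeq w = n})) ⟨?_, ?_⟩
  · rintro ⟨⟨π, hc, hD⟩, x⟩ ⟨⟨σ, hc', hD'⟩, y⟩ h
    simp only [Subtype.mk.injEq] at h
    let e := Equiv.ofBijective _ (hc.orbit_bijective x).1
    let e' := Equiv.ofBijective _ (hc'.orbit_bijective y).1
    let k : Fin n → Lex (ℕ → ℕ) := fun i => toLex (shiftSeq^[(i : ℕ)] (itin J π x))
    have hke : ∀ i, k i = toLex (itin J π (e i)) := fun i => by
      simp only [k, itin_iterate]
      rfl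
    have hke' : ∀ i, k i = toLex (itin J σ (e' i)) := fun i => by
      simp only [k, h, itin_iterate]
      rfl
    have hk : Function.Injective k := fun i j hij => by
      rw [hke, hke] at hij
      exact e.injective (itin_injective hc hD (toLex.injective hij))
    -- both orbit listings, inverted, sort the rotations of the common itinerary
    have hee : e.symm = e'.symm := by
      apply perm_eq_of_monotone_key hk
      · intro a b hab
        simpa [hke] using (itin_strictMono hc hD).monotone hab
      · intro a b hab
        simpa [hke'] using (itin_strictMono hc' hD').monotone hab
    have hee' : e = e' := by rw [← e.symm_symm, hee, e'.symm_symm]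
    have hlt : ∀ i : Fin n, (π ^ (i : ℕ)) x = (σ ^ (i : ℕ)) y := fun i =>
      congrFun (congrArg DFunLike.coe hee') i
    have hmod : ∀ (τ : Equiv.Perm (Fin n)), τ ^ n = 1 → ∀ i, τ ^ i = τ ^ (i % n) := by
      intro τ hτ i
      conv_lhs => rw [← Nat.mod_add_div i n, pow_add, pow_mul, hτ, one_pow, mul_one]
    have hall : ∀ i : ℕ, (π ^ i) x = (σ ^ i) y := fun i => by
      rw [hmod π (hc.orbit_bijective x).2 i, hmod σ (hc'.orbit_bijective y).2 i]
      exact hlt ⟨i % n, Nat.mod_lt _ hn⟩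
    have hxy : x = y := hall 0
    subst hxy
    have hπσ : π = σ := by
      ext1 z
      obtain ⟨i, rfl⟩ := hc x z
      have := hall (i + 1)
      rw [pow_succ', pow_succ', Equiv.Perm.mul_apply, Equiv.Perm.mul_apply, ← hall i] at this
      exact this
    subst hπσ
    rfl
  · rintro ⟨w, hw, hmin⟩
    let k : Fin n → Lex (ℕ → ℕ) := fun i => toLex (shiftSeq^[(i : ℕ)] w)
    have hk : Function.Injective k := fun i j hij => by
      have hi : (i : ℕ) ∈ Set.Iio (Function.minimalPeriod shiftSeq w) := by rw [hmin]; exact i.2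
      have hj : (j : ℕ) ∈ Set.Iio (Function.minimalPeriod shiftSeq w) := by rw [hmin]; exact j.2
      exact Fin.ext (Function.iterate_injOn_Iio_minimalPeriod hi hj (toLex.injective hij))
    let e := Tuple.sort k
    have hs : StrictMono (k ∘ e) :=
      (Tuple.monotone_sort k).strictMono_of_injective (hk.comp e.injective)
    let ρ : Equiv.Perm (Fin n) := Equiv.addRight 1
    have hρ : ∀ i : Fin n, shiftSeq (shiftSeq^[(i : ℕ)] w) = shiftSeq^[(ρ i : ℕ)] w := by
      intro i
      have h1 : (ρ i : ℕ) = (i + 1) % n := val_addRight_pow 1 i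
      rw [h1, hw.1.iterate_mod_apply, Function.iterate_succ_apply']
    have hlt : ∀ x y, x < y →
        w (e x) < w (e y) ∨ w (e x) = w (e y) ∧ k (ρ (e x)) < k (ρ (e y)) := by
      intro x y hxy
      have h1 := (toLex_lt_iff_shiftSeq _ _).1 (hs hxy)
      rw [hρ, hρ, shiftSeq_iterate, shiftSeq_iterate, zero_add, zero_add] at h1
      exact h1
    have hc : (fun x : Fin n => w (e x)) = fun x : Fin n => blk J x := by
      apply eq_of_monotone_of_card_fiber_eq
      · intro x y hxy
        rcases hxy.lt_or_eq with h | rfl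
        · rcases hlt x y h with h1 | h1
          · exact h1.le
          · exact h1.1.le
        · exact le_rfl
      · exact fun x y hxy => blk_mono J hxy
      · intro v
        rw [card_fiber_comp (fun a : Fin n => w a) e, ← card_filter_range_eq n (fun a => w a = v),
          hw.2 v, card_filter_range_eq]
    have hc' := fun x => congrFun hc x
    -- the cyclic rotation of positions, transported to ranks
    let π : Equiv.Perm (Fin n) := e⁻¹ * ρ * e
    have heπ : ∀ (i : ℕ) (x : Fin n), e ((π ^ i) x) = (ρ ^ i) (e x) := by
      intro i
      induction i with
      | zero => intro x; rfl
      | succ i ih =>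
        intro x
        rw [pow_succ, pow_succ, Equiv.Perm.mul_apply, Equiv.Perm.mul_apply, ih]
        simp
    have hfull : IsFullCycle π := by
      intro x y
      refine ⟨(e y : ℕ) + (n - e x), e.injective (Fin.ext ?_)⟩
      rw [heπ, val_addRight_pow]
      have := (e x).2
      rw [show (e x : ℕ) + (e y + (n - e x)) = e y + n by omega, Nat.add_mod_right,
        Nat.mod_eq_of_lt (e y).2]
    have hdesc : descSet π ⊆ J := by
      rw [descSet_subset_iff]
      intro x y hxy hb
      rcases hlt x y hxy with h1 | h1
      · rw [hc' x, hc' y] at h1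
        omega
      · have h2 : ∀ z, ρ (e z) = e (π z) := fun z => (heπ 1 z).symm
        rw [h2, h2] at h1
        exact hs.lt_iff_lt.1 h1.2
    refine ⟨⟨⟨π, hfull, hdesc⟩, e.symm 0⟩, ?_⟩
    apply Subtype.ext
    ext i
    simp only [itin]
    rw [← hc' ((π ^ i) (e.symm 0)), heπ, val_addRight_pow]
    simp [apply_mod_of_isPeriodicPt hw.1 i]

/-! ### Counting words by period -/

lemma card_filter_range_mul_of_periodic {w : ℕ → ℕ} {m : ℕ} (hw : ∀ i, w (i + m) = w i)
    (d : ℕ) (p : ℕ → Prop) [DecidablePred p] :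
    #{i ∈ range (d * m) | p (w i)} = d * #{i ∈ range m | p (w i)} := by
  simp only [card_filter]
  induction d with
  | zero => simp
  | succ d ih =>
    have h : ∀ x, w (d * m + x) = w x := fun x => by
      rw [add_comm]
      exact (Function.Periodic.nat_mul (f := w) hw d) x
    rw [Nat.succ_mul, sum_range_add, ih, Nat.succ_mul]
    simp only [h]

lemma card_filter_range_mul_div {d : ℕ} (hd : 0 < d) (m : ℕ) (p : ℕ → Prop) [DecidablePred p] :
    #{i ∈ range (d * m) | p (i / d)} = d * #{i ∈ range m | p i} := by
  simp only [card_filter]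
  induction m with
  | zero => simp
  | succ m ih =>
    rw [Nat.mul_succ, sum_range_add, ih, sum_range_succ, mul_add]
    congr 1
    have h : ∀ x ∈ range d, (if p ((d * m + x) / d) then 1 else 0) = if p m then 1 else 0 := by
      intro x hx
      rw [Nat.mul_add_div hd, Nat.div_eq_of_lt (mem_range.1 hx), add_zero]
    rw [sum_congr rfl h]
    simp

lemma divSet_eq_image {J : Finset ℕ} {d : ℕ} (h : ∀ j ∈ J, d ∣ j) :
    divSet J d = J.image (· / d) := by
  rw [divSet, filter_true_of_mem h]

lemma blk_divSet {J : Finset ℕ} {d : ℕ} (hd : 0 < d) (h : ∀ j ∈ J, d ∣ j) (x : ℕ) :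
    blk (divSet J d) (x / d) = blk J x := by
  rw [divSet_eq_image h, blk, blk, filter_image, card_image_of_injOn]
  · congr 1
    apply filter_congr
    intro j hj
    obtain ⟨a, rfl⟩ := h j hj
    rw [Nat.mul_div_cancel_left a hd, Nat.le_div_iff_mul_le hd, mul_comm]
  · intro a ha b hb hab
    simp only [coe_filter, Set.mem_ofPred_eq] at ha hb
    exact Nat.div_left_inj (h a ha.1) (h b hb.1) |>.1 hab

/-- If a word of length `d * m` has period `m`, every prefix count of the content is a multiple of `d`;
each `j ∈ J` is such a prefix count. -/
lemma dvd_of_mem_wordsOf {d m : ℕ} {J : Finset ℕ} (hJ : J ⊆ Ioo 0 (d * m)) {w : ℕ → ℕ}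
    (hw : w ∈ wordsOf (d * m) J) (hp : Function.IsPeriodicPt shiftSeq m w) :
    ∀ j ∈ J, d ∣ j := by
  intro j hj
  have h1 : #{i ∈ range (d * m) | blk J i < blk J j} = j := by
    have : {i ∈ range (d * m) | blk J i < blk J j} = range j := by
      ext i
      have := mem_Ioo.1 (hJ hj)
      simp only [mem_filter, mem_range, blk_lt_iff hj]
      omega
    rw [this, card_range]
  have h2 : ∀ f : ℕ → ℕ, #{i ∈ range (d * m) | f i < blk J j} =
      ∑ v ∈ range (blk J j), #{i ∈ range (d * m) | f i = v} := by
    intro f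
    rw [card_eq_sum_card_fiberwise (f := f) (t := range (blk J j))]
    · refine sum_congr rfl fun v hv => ?_
      rw [filter_filter]
      congr 1
      apply filter_congr
      intro i _
      have := mem_range.1 hv
      omega
    · intro i hi
      simpa using (mem_filter.1 hi).2
  rw [h2, ← sum_congr rfl fun v _ => hw.2 v, ← h2,
    card_filter_range_mul_of_periodic (isPeriodicPt_shiftSeq.1 hp)
      d (fun v => v < blk J j)] at h1
  exact ⟨_, h1.symm⟩

/-- The words of length `d * m` and content `J` that have period `m` are the `d`-fold repetitions
of the words of length `m` and content `J / d`. -/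
lemma wordsOf_periodic {d m : ℕ} (hd : 0 < d) {J : Finset ℕ} (hJ : J ⊆ Ioo 0 (d * m)) :
    {w ∈ wordsOf (d * m) J | Function.IsPeriodicPt shiftSeq m w} =
      if ∀ j ∈ J, d ∣ j then wordsOf m (divSet J d) else ∅ := by
  split_ifs with h
  · have hblk : ∀ v, #{i ∈ range (d * m) | blk J i = v} =
        d * #{i ∈ range m | blk (divSet J d) i = v} := by
      intro v
      rw [← card_filter_range_mul_div hd m (fun i => blk (divSet J d) i = v)]
      simp only [blk_divSet hd h]
    ext w
    constructor
    · rintro ⟨hw, hp⟩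
      refine ⟨hp, fun v => ?_⟩
      have := hw.2 v
      rw [hblk, card_filter_range_mul_of_periodic (isPeriodicPt_shiftSeq.1 hp) d
        (fun a => a = v)] at this
      exact Nat.eq_of_mul_eq_mul_left hd this
    · rintro ⟨hp, hc⟩
      refine ⟨⟨hp.const_mul d, fun v => ?_⟩, hp⟩
      rw [hblk, card_filter_range_mul_of_periodic (isPeriodicPt_shiftSeq.1 hp) d
        (fun a => a = v), hc v]
  · ext w
    simp only [Set.mem_ofPred_eq, Set.mem_empty_iff_false, iff_false, not_and]
    exact fun hw hp => h (dvd_of_mem_wordsOf hJ hw hp)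

/-- Words of positive length with a given content exist and are finite in number. -/
lemma wordsOf_finite (n : ℕ) (hn : 0 < n) (J : Finset ℕ) : (wordsOf n J).Finite := by
  apply Set.finite_of_ncard_pos
  rw [card_wordsOf n hn, alphaP]
  have : Nonempty {π : Equiv.Perm (Fin n) // descSet π ⊆ J} :=
    ⟨⟨1, (descSet_subset_iff _ _).2 fun x y hxy _ => hxy⟩⟩
  exact Nat.card_pos

lemma sum_moebius_divisors {m : ℕ} :
    ∑ d ∈ m.divisors, ArithmeticFunction.moebius d = if m = 1 then 1 else 0 := by
  have h := congrArg (fun f => f m) ArithmeticFunction.moebius_mul_coe_zeta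
  rwa [ArithmeticFunction.coe_mul_zeta_apply, ArithmeticFunction.one_apply] at h

/-- Möbius inversion over the minimal period: `∑_{d ∣ n} μ(d) [w has period n / d]` is `1` when `w`
is primitive and `0` otherwise. -/
lemma sum_moebius_period {n : ℕ} (hn : 0 < n) {w : ℕ → ℕ}
    (hw : Function.IsPeriodicPt shiftSeq n w) :
    (∑ d ∈ n.divisors, if Function.minimalPeriod shiftSeq w ∣ n / d then
      ArithmeticFunction.moebius d else 0) =
    if Function.minimalPeriod shiftSeq w = n then 1 else 0 := by
  obtain ⟨q, hq⟩ := Function.isPeriodicPt_iff_minimalPeriod_dvd.1 hw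
  set p := Function.minimalPeriod shiftSeq w
  have hp : 0 < p := Nat.pos_of_ne_zero fun h => by simp [h] at hq; omega
  have hq0 : 0 < q := Nat.pos_of_ne_zero fun h => by simp [h] at hq; omega
  have hset : {d ∈ n.divisors | p ∣ n / d} = q.divisors := by
    ext d
    simp only [mem_filter, Nat.mem_divisors]
    constructor
    · rintro ⟨⟨⟨e, he⟩, -⟩, h⟩
      have hd : 0 < d := Nat.pos_of_ne_zero fun h => by simp [h] at he; omega
      rw [he, Nat.mul_div_cancel_left e hd] at h
      obtain ⟨f, rfl⟩ := h
      refine ⟨⟨f, Nat.eq_of_mul_eq_mul_left hp ?_⟩, hq0.ne'⟩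
      rw [← hq, he]
      ring
    · rintro ⟨⟨e, rfl⟩, -⟩
      have hd : 0 < d := Nat.pos_of_ne_zero fun h => by simp [h] at hq0
      have : n = d * (p * e) := by rw [hq]; ring
      refine ⟨⟨⟨_, this⟩, hn.ne'⟩, ?_⟩
      rw [this, Nat.mul_div_cancel_left _ hd]
      exact Dvd.intro e rfl
  rw [← sum_filter, hset, sum_moebius_divisors]
  congr 1
  rw [hq, eq_iff_iff]
  constructor
  · rintro rfl
    simp
  · intro h
    exact (Nat.eq_of_mul_eq_mul_left hp (by rw [mul_one]; exact h)).symm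

/-- `n α^cyc_n(J) = ∑_{d ∣ n, d ∣ J} μ(d) α_{n/d}(J/d)`. -/
lemma mul_alphaC_eq (n : ℕ) (hn : 0 < n) (J : Finset ℕ) (hJ : J ⊆ Ioo 0 n) :
    (n * alphaC n J : ℤ) = ∑ d ∈ n.divisors, ArithmeticFunction.moebius d *
      if ∀ j ∈ J, d ∣ j then (alphaP (n / d) (divSet J d) : ℤ) else 0 := by
  classical
  have hfin := wordsOf_finite n hn J
  have hcard : ∀ P : (ℕ → ℕ) → Prop,
      {w ∈ wordsOf n J | P w}.ncard = #{w ∈ hfin.toFinset | P w} := by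
    intro P
    rw [← Set.ncard_coe_finset]
    congr 1
    ext w
    simp
  rw [← Nat.cast_mul, ← card_primitive n hn J, hcard, card_filter]
  push_cast
  have h1 : ∀ w ∈ hfin.toFinset,
      ((if Function.minimalPeriod shiftSeq w = n then 1 else 0 : ℤ)) =
      ∑ d ∈ n.divisors, if Function.minimalPeriod shiftSeq w ∣ n / d then
      ArithmeticFunction.moebius d else 0 := fun w hw =>
    (sum_moebius_period hn ((hfin.mem_toFinset.1 hw).1)).symm
  rw [sum_congr rfl h1, sum_comm]
  refine sum_congr rfl fun d hd => ?_
  obtain ⟨m, hm⟩ := Nat.dvd_of_mem_divisors hd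
  have hd0 := Nat.pos_of_mem_divisors hd
  have hm0 : 0 < m := Nat.pos_of_ne_zero fun h => by simp [h] at hm; omega
  have hnd : n / d = m := by rw [hm, Nat.mul_div_cancel_left _ hd0]
  have h2 := hcard (fun w => Function.IsPeriodicPt shiftSeq m w)
  have h3 := wordsOf_periodic hd0 (hm ▸ hJ)
  rw [← hm] at h3
  rw [h3] at h2
  simp only [Function.isPeriodicPt_iff_minimalPeriod_dvd] at h2
  rw [hnd, ← sum_filter, sum_const, ← h2, nsmul_eq_mul, mul_comm]
  split_ifs
  · rw [card_wordsOf m hm0]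
  · simp

/-! ### Inclusion–exclusion over descent sets -/

/-- Inclusion–exclusion over the subsets of a finite set. -/
lemma sum_powerset_inversion {a b : Finset ℕ → ℤ} (h : ∀ I, a I = ∑ J ∈ I.powerset, b J)
    (I : Finset ℕ) : b I = ∑ J ∈ I.powerset, (-1) ^ (#I - #J) * a J := by
  have h1 : ∀ K ∈ I.powerset, (∑ J ∈ I.powerset, if K ⊆ J then (-1 : ℤ) ^ (#I - #J) else 0) =
      if K = I then 1 else 0 := by
    intro K hK
    rw [mem_powerset] at hK
    rw [← sum_filter]
    have : ∑ J ∈ I.powerset with K ⊆ J, (-1 : ℤ) ^ (#I - #J) =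
        ∑ M ∈ (I \ K).powerset, (-1 : ℤ) ^ #M := by
      refine sum_nbij' (fun J => I \ J) (fun M => I \ M) ?_ ?_ ?_ ?_ ?_
      · intro J hJ
        simp only [mem_filter, mem_powerset] at hJ ⊢
        exact sdiff_subset_sdiff le_rfl hJ.2
      · intro M hM
        simp only [mem_filter, mem_powerset] at hM ⊢
        refine ⟨sdiff_subset, fun x hx => mem_sdiff.2 ⟨hK hx, fun hxM => ?_⟩⟩
        exact (mem_sdiff.1 (hM hxM)).2 hx
      · intro J hJ
        simp only [mem_filter, mem_powerset] at hJ
        exact Finset.sdiff_sdiff_eq_self hJ.1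
      · intro M hM
        simp only [mem_powerset] at hM
        exact Finset.sdiff_sdiff_eq_self (hM.trans sdiff_subset)
      · intro J hJ
        simp only [mem_filter, mem_powerset] at hJ
        rw [card_sdiff_of_subset hJ.1]
    rw [this, sum_powerset_neg_one_pow_card]
    congr 1
    rw [sdiff_eq_empty_iff_subset, eq_iff_iff]
    exact ⟨fun h => hK.antisymm h, fun h => h ▸ le_rfl⟩
  have h2 : ∀ J ∈ I.powerset, (-1 : ℤ) ^ (#I - #J) * a J =
      ∑ K ∈ I.powerset, (if K ⊆ J then (-1 : ℤ) ^ (#I - #J) else 0) * b K := by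
    intro J hJ
    rw [mem_powerset] at hJ
    rw [h, mul_sum]
    simp only [ite_mul, zero_mul]
    rw [← sum_filter]
    refine sum_congr ?_ fun _ _ => rfl
    ext K
    simp only [mem_filter, mem_powerset]
    exact ⟨fun hK => ⟨hK.trans hJ, hK⟩, fun hK => hK.2⟩
  rw [sum_congr rfl h2, sum_comm]
  simp only [← sum_mul]
  rw [sum_congr rfl fun K hK => by rw [h1 K hK]]
  simp

lemma alphaP_eq_sum (n : ℕ) (I : Finset ℕ) :
    (alphaP n I : ℤ) = ∑ J ∈ I.powerset, (betaP n J : ℤ) := by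
  classical
  simp only [alphaP, betaP, Nat.card_eq_fintype_card, Fintype.card_subtype]
  rw [card_eq_sum_card_fiberwise (f := descSet) (t := I.powerset) (fun π hπ => by simpa using hπ)]
  push_cast
  refine sum_congr rfl fun J hJ => ?_
  rw [filter_filter]
  congr 2
  ext π
  simp only [mem_filter, mem_univ, true_and]
  exact ⟨fun h => h.2, fun h => ⟨h ▸ mem_powerset.1 hJ, h⟩⟩

lemma alphaC_eq_sum (n : ℕ) (I : Finset ℕ) :
    (alphaC n I : ℤ) = ∑ J ∈ I.powerset, (betaC n J : ℤ) := by
  classical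
  simp only [alphaC, betaC, Nat.card_eq_fintype_card, Fintype.card_subtype]
  rw [card_eq_sum_card_fiberwise (f := descSet) (t := I.powerset)
    (fun π hπ => by simpa using (mem_filter.1 hπ).2.2)]
  push_cast
  refine sum_congr rfl fun J hJ => ?_
  rw [filter_filter]
  congr 2
  ext π
  simp only [mem_filter, mem_univ, true_and]
  exact ⟨fun h => ⟨h.1.1, h.2⟩, fun h => ⟨⟨h.1, h.2 ▸ mem_powerset.1 hJ⟩, h.2⟩⟩

/-- The subsets of `I / d` are the sets `J / d` for the subsets `J` of `I` consisting of
multiples of `d`. -/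
lemma sum_powerset_divSet {d : ℕ} (I : Finset ℕ) (F : Finset ℕ → ℤ) :
    (∑ J ∈ I.powerset, if ∀ j ∈ J, d ∣ j then (-1) ^ (#I - #J) * F (divSet J d) else 0) =
      (-1) ^ (#I - #(divSet I d)) *
        ∑ K ∈ (divSet I d).powerset, (-1) ^ (#(divSet I d) - #K) * F K := by
  have hinj : Set.InjOn (· / d) ((I.filter fun i => d ∣ i : Finset ℕ) : Set ℕ) := by
    intro a ha b hb hab
    simp only [coe_filter, Set.mem_ofPred_eq] at ha hb
    exact Nat.div_left_inj ha.2 hb.2 |>.1 hab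
  have hset : {J ∈ I.powerset | ∀ j ∈ J, d ∣ j} = (I.filter fun i => d ∣ i).powerset := by
    ext J
    simp only [mem_filter, mem_powerset, subset_iff]
    exact ⟨fun h j hj => ⟨h.1 hj, h.2 j hj⟩, fun h => ⟨fun j hj => (h hj).1, fun j hj => (h hj).2⟩⟩
  rw [← sum_filter, hset, mul_sum]
  have hcI : #(divSet I d) = #(I.filter fun i => d ∣ i) := card_image_of_injOn hinj
  conv_rhs => rw [divSet, powerset_image]
  rw [sum_image]
  · refine sum_congr rfl fun J hJ => ?_
    rw [mem_powerset] at hJ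
    have hdJ : ∀ j ∈ J, d ∣ j := fun j hj => (mem_filter.1 (hJ hj)).2
    have hcJ : #(J.image (· / d)) = #J := card_image_of_injOn (hinj.mono (by exact_mod_cast hJ))
    have h1 := card_le_card hJ
    have h2 := card_filter_le I (fun i => d ∣ i)
    rw [divSet_eq_image hdJ, ← mul_assoc, ← pow_add, hcJ]
    change _ = (-1) ^ (_ - #(divSet I d) + (#(divSet I d) - _)) * _
    rw [hcI]
    congr 2
    omega
  · intro A hA B hB hAB
    exact image_injOn_powerset_of_injOn hinj hA hB hAB

/-- Theorem (main theorem, part (c)): for all `I ⊆ [n-1]`,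
`β^cyc_n(I) = (1/n) Σ_{d ∣ n} μ(d) · (-1)^{|I| - |I/d|} · β_{n/d}(I/d)`. -/
theorem betaC_eq_moebius_sum (n : ℕ) (hn : 0 < n) (I : Finset ℕ) (hI : I ⊆ Finset.Ioo 0 n) :
    (betaC n I : ℚ) =
      (1 / n) * ∑ d ∈ n.divisors,
        (ArithmeticFunction.moebius d : ℚ) * (-1) ^ (I.card - (divSet I d).card) * betaP (n / d) (divSet I d) := by
  have key : (n * betaC n I : ℤ) = ∑ d ∈ n.divisors,
      ArithmeticFunction.moebius d * (-1) ^ (#I - #(divSet I d)) *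
        betaP (n / d) (divSet I d) := by
    rw [sum_powerset_inversion (alphaC_eq_sum n) I, mul_sum]
    have h1 : ∀ J ∈ I.powerset, (n : ℤ) * ((-1) ^ (#I - #J) * (alphaC n J : ℤ)) =
        ∑ d ∈ n.divisors, ArithmeticFunction.moebius d *
          if ∀ j ∈ J, d ∣ j then (-1) ^ (#I - #J) * (alphaP (n / d) (divSet J d) : ℤ) else 0 := by
      intro J hJ
      rw [mul_left_comm, mul_alphaC_eq n hn J ((mem_powerset.1 hJ).trans hI), mul_sum]
      refine sum_congr rfl fun d _ => ?_
      split_ifs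
      · ring
      · simp
    rw [sum_congr rfl h1, sum_comm]
    refine sum_congr rfl fun d _ => ?_
    rw [← mul_sum, sum_powerset_divSet I (fun K => (alphaP (n / d) K : ℤ)),
      ← sum_powerset_inversion (alphaP_eq_sum (n / d)) (divSet I d), mul_assoc]
  have hn' : (n : ℚ) ≠ 0 := by exact_mod_cast hn.ne'
  have keyQ : (n * betaC n I : ℚ) = ∑ d ∈ n.divisors,
      (ArithmeticFunction.moebius d : ℚ) * (-1) ^ (#I - #(divSet I d)) *
        betaP (n / d) (divSet I d) := by
    exact_mod_cast key
  rw [← keyQ]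
  field_simp
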